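/- Let μ⁻, μ⁺ be compactly supported probability measures on ℝ^d, let c(x,y) = (1/2)|x−y|², and suppose Brenier's optimal transport map from μ⁻ to μ⁺ is T = ∇f for a convex differentiable function f : ℝ^d → ℝ with ∇f Lipschitz with constant M and (∇f)_# μ⁻ = μ⁺. For ε > 0 let γ_ε be the minimizer of the entropic problem at parameter ε. Then there exists C ≥ 0 such that for every ε ∈ (0,1): ∫∫ |y − T(x)|² dγ_ε(x,y) ≤ M·( d·ε·log(1/ε) + C·ε ). -/

import Mathlib

open MeasureTheory Real Set Filter Classical
open scoped ENNReal NNReal Topology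

noncomputable section

/-- Relative entropy (Kullback–Leibler divergence) `Ent(γ | q)`, with values in `EReal`:
it equals `∫ ρ log ρ dq` if `γ = ρ·q` (with `ρ log ρ` integrable) and `+∞` otherwise. -/
def Ent {α : Type*} [MeasurableSpace α] (γ q : Measure α) : EReal :=
  if γ ≪ q ∧ Integrable (fun x => ((γ.rnDeriv q) x).toReal * Real.log ((γ.rnDeriv q) x).toReal) q
  then ((∫ x, ((γ.rnDeriv q) x).toReal * Real.log ((γ.rnDeriv q) x).toReal ∂q : ℝ) : EReal)
  else ⊤

/-- Entropic optimal transport cost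
`v_ε = inf { ∫ c dγ + ε Ent(γ | μ⁻ ⊗ μ⁺) : γ coupling of μ⁻ and μ⁺ }`. -/
def entCost {α β : Type*} [MeasurableSpace α] [MeasurableSpace β]
    (μm : Measure α) (μp : Measure β) (c : α × β → ℝ) (ε : ℝ) : EReal :=
  sInf {v : EReal | ∃ γ : Measure (α × β), IsProbabilityMeasure γ ∧ γ.fst = μm ∧ γ.snd = μp ∧
    v = ((∫ p, c p ∂γ : ℝ) : EReal) + (ε : EReal) * Ent γ (μm.prod μp)}

/-!
For every coupling, the quadratic transport cost differs from the integral of the duality gap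
`f(x) + f*(y) - ⟪x, y⟫` by a constant depending only on the marginals. At `y = T z` the gap is the
Bregman divergence `f(x) - f(z) - ⟪∇f(z), x - z⟫`, which lies between `|y - T x|² / (2M)`
(co-coercivity of the gradient) and `M |x - z|² / 2` (Taylor). The lower bound reduces the theorem
to an upper bound on the integrated gap of the optimal plan. For that, compare it with the
coupling which moves `x` to `T x'`, where `x'` is drawn independently in the cell of `x` for a
partition of the support into cells of size `√ε`: its gap is `O(ε)` by the upper bound, and its
entropy is at most the logarithm of the number of cells, about `ε ^ (-d / 2)`.
-/

section ConvexGradient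

variable {E : Type*} [NormedAddCommGroup E] [InnerProductSpace ℝ E] [CompleteSpace E]
  {f : E → ℝ}

theorem hasDerivAt_comp_line_of_hasGradientAt {x h g : E} {t : ℝ}
    (hg : HasGradientAt f g (x + t • h)) :
    HasDerivAt (fun s : ℝ => f (x + s • h)) (inner ℝ g h) t := by
  have hline : HasDerivAt (fun s : ℝ => x + s • h) h t := by
    simpa using ((hasDerivAt_id t).smul_const h).const_add x
  have hcomp := hg.hasFDerivAt.comp_hasDerivAt t hline
  rwa [InnerProductSpace.toDual_apply_apply] at hcomp

theorem add_inner_gradient_le_of_convexOn {s : Set E} (hf : ConvexOn ℝ s f) {x y g : E}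
    (hx : x ∈ s) (hy : y ∈ s) (hg : HasGradientAt f g x) : f x + inner ℝ g (y - x) ≤ f y := by
  have hline : ConvexOn ℝ (AffineMap.lineMap x y ⁻¹' s) (fun t : ℝ => f (x + t • (y - x))) := by
    have hcomp : f ∘ (AffineMap.lineMap x y : ℝ →ᵃ[ℝ] E) = fun t : ℝ => f (x + t • (y - x)) := by
      ext t
      simp [AffineMap.lineMap_apply, add_comm]
    exact hcomp ▸ hf.comp_affineMap (AffineMap.lineMap x y : ℝ →ᵃ[ℝ] E)
  have hderiv : HasDerivAt (fun t : ℝ => f (x + t • (y - x))) (inner ℝ g (y - x)) 0 :=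
    hasDerivAt_comp_line_of_hasGradientAt (by simpa using hg)
  have hslope := hline.le_slope_of_hasDerivAt (by simpa using hx) (by simpa using hy)
    zero_lt_one hderiv
  simp only [slope_def_field, one_smul, add_sub_cancel, zero_smul, add_zero, sub_zero,
    div_one] at hslope
  linarith

variable {T : E → E} {M : ℝ≥0}

theorem le_add_inner_gradient_add_sq_of_lipschitzWith (hT : ∀ x, HasGradientAt f (T x) x)
    (hLip : LipschitzWith M T) (x y : E) :
    f y ≤ f x + inner ℝ (T x) (y - x) + M / 2 * ‖y - x‖ ^ 2 := by
  set h := y - x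
  let g : ℝ → ℝ := fun t => f (x + t • h) - t * inner ℝ (T x) h - M / 2 * ‖h‖ ^ 2 * t ^ 2
  have hg (t : ℝ) : HasDerivAt g
      (inner ℝ (T (x + t • h)) h - inner ℝ (T x) h - M / 2 * ‖h‖ ^ 2 * (2 * t)) t := by
    have := ((hasDerivAt_comp_line_of_hasGradientAt (hT (x + t • h))).sub
      ((hasDerivAt_id t).mul_const (inner ℝ (T x) h))).sub
      ((hasDerivAt_pow 2 t).const_mul (M / 2 * ‖h‖ ^ 2 : ℝ))
    exact this.congr_deriv (by simp)
  have hanti : AntitoneOn g (Set.Icc 0 1) := by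
    refine antitoneOn_of_hasDerivWithinAt_nonpos (convex_Icc 0 1)
      (fun t _ => (hg t).continuousAt.continuousWithinAt)
      (fun t _ => (hg t).hasDerivWithinAt) (fun t ht => ?_)
    have ht0 : 0 ≤ t := (interior_subset ht).1
    have hincr : inner ℝ (T (x + t • h) - T x) h ≤ M * (t * ‖h‖) * ‖h‖ := by
      refine (real_inner_le_norm _ _).trans (mul_le_mul_of_nonneg_right ?_ (norm_nonneg _))
      simpa [norm_smul, abs_of_nonneg ht0] using hLip.norm_sub_le (x + t • h) x
    rw [inner_sub_left] at hincr
    linarith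
  have hg01 : g 1 ≤ g 0 := hanti (by simp) (by simp) zero_le_one
  have hxy : x + h = y := add_sub_cancel x y
  simp only [g, one_smul, zero_smul, hxy] at hg01
  simp only [add_zero] at hg01
  linarith

-- Compare the values of `f` and of its tangent plane at `y` at the point reached from `x` by one
-- gradient step of length `1 / M` for the difference of the two.
theorem norm_gradient_sub_sq_le_of_convexOn (hf : ConvexOn ℝ Set.univ f)
    (hT : ∀ x, HasGradientAt f (T x) x) (hLip : LipschitzWith M T) (x y : E) :
    ‖T x - T y‖ ^ 2 ≤ 2 * M * (f x - f y - inner ℝ (T y) (x - y)) := by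
  rcases eq_or_ne M 0 with rfl | hM
  · have hconst : ‖T x - T y‖ = 0 := by simpa using hLip.norm_sub_le x y
    simp [hconst]
  set D := T x - T y
  set z := x - (M : ℝ)⁻¹ • D with hz
  have hlower := add_inner_gradient_le_of_convexOn hf (mem_univ y) (mem_univ z) (hT y)
  have hupper := le_add_inner_gradient_add_sq_of_lipschitzWith hT hLip x z
  have hzx : z - x = -((M : ℝ)⁻¹ • D) := by simp [hz]
  have hzy : z - y = (x - y) - (M : ℝ)⁻¹ • D := by rw [hz]; abel
  have hinner : inner ℝ (T x) D - inner ℝ (T y) D = ‖D‖ ^ 2 := by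
    rw [← inner_sub_left, real_inner_self_eq_norm_sq]
  rw [hzy, inner_sub_right, inner_smul_right] at hlower
  rw [hzx, norm_neg, inner_neg_right, inner_smul_right, norm_smul, mul_pow, norm_inv,
    NNReal.norm_eq] at hupper
  have hsquare : (M : ℝ) / 2 * ((M : ℝ)⁻¹ ^ 2 * ‖D‖ ^ 2) = (M : ℝ)⁻¹ / 2 * ‖D‖ ^ 2 := by
    field_simp
  calc ‖D‖ ^ 2 = 2 * M * ((M : ℝ)⁻¹ / 2 * ‖D‖ ^ 2) := by field_simp
    _ ≤ 2 * M * (f x - f y - inner ℝ (T y) (x - y)) := by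
        gcongr
        rw [hsquare] at hupper
        rw [← hinner] at hupper ⊢
        linarith

end ConvexGradient

section Entropy

variable {α : Type*} [MeasurableSpace α]

theorem Ent_nonneg (γ q : Measure α) [IsProbabilityMeasure γ] [IsProbabilityMeasure q] :
    0 ≤ Ent γ q := by
  unfold Ent
  split_ifs with h
  · have hint : Integrable (fun x => (γ.rnDeriv q x).toReal - 1) q :=
      Measure.integrable_toReal_rnDeriv.sub (integrable_const 1)
    refine EReal.coe_nonneg.2 ?_
    calc (0 : ℝ) = ∫ x, ((γ.rnDeriv q x).toReal - 1) ∂q := by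
          rw [integral_sub Measure.integrable_toReal_rnDeriv (integrable_const 1),
            Measure.integral_toReal_rnDeriv h.1]
          simp
      _ ≤ _ := integral_mono hint h.2 fun x => self_sub_one_le_mul_log ENNReal.toReal_nonneg
  · exact le_top

theorem rnDeriv_le_of_le_withDensity {γ q : Measure α} [SigmaFinite q]
    {w : α → ℝ≥0∞} (h : γ ≤ q.withDensity w) : γ.rnDeriv q ≤ᵐ[q] w := by
  refine ae_le_of_forall_setLIntegral_le_of_sigmaFinite (Measure.measurable_rnDeriv γ q)
    fun s hs _ => (Measure.setLIntegral_rnDeriv_le s).trans ?_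
  rw [← withDensity_apply _ hs]
  exact h s

theorem log_le_log_add_div_sub_one {r N : ℝ} (hr : 0 < r) (hN : 0 < N) :
    Real.log r ≤ Real.log N + (r / N - 1) := by
  have hlog := Real.log_le_sub_one_of_pos (div_pos hr hN)
  rw [Real.log_div hr.ne' hN.ne'] at hlog
  linarith

-- Jensen's inequality for `log` under `γ`, in the form of the tangent line of `log` at `N`.
theorem Ent_le_log_of_lintegral_rnDeriv_le {γ q : Measure α} [IsProbabilityMeasure γ]
    [IsProbabilityMeasure q] (hac : γ ≪ q) {N : ℝ≥0} (hN : 0 < N)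
    (h : ∫⁻ x, γ.rnDeriv q x ∂γ ≤ N) : Ent γ q ≤ (Real.log N : EReal) := by
  set r : α → ℝ := fun x => (γ.rnDeriv q x).toReal
  have hr0 (x : α) : 0 ≤ r x := ENNReal.toReal_nonneg
  have hmeas : AEMeasurable (γ.rnDeriv q) γ := (Measure.measurable_rnDeriv γ q).aemeasurable
  have hrint : Integrable r γ :=
    integrable_toReal_of_lintegral_ne_top hmeas (h.trans_lt ENNReal.coe_lt_top).ne
  have hrN : ∫ x, r x ∂γ ≤ N := by
    rw [integral_toReal hmeas (hac.ae_le (Measure.rnDeriv_lt_top γ q))]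
    exact ENNReal.toReal_le_of_le_ofReal N.2 (by simpa using h)
  have hboundint : Integrable (fun x => Real.log N + (r x / N - 1)) γ := by fun_prop
  have hbound (x : α) : r x * Real.log (r x) ≤ r x * (Real.log N + (r x / N - 1)) := by
    rcases (hr0 x).eq_or_lt with h0 | hpos
    · simp [← h0]
    · exact mul_le_mul_of_nonneg_left (log_le_log_add_div_sub_one hpos hN) hpos.le
  have hupper : Integrable (fun x => r x * (Real.log N + (r x / N - 1))) q :=
    (integrable_toReal_rnDeriv_mul_iff hac).2 hboundint
  have hlower : Integrable (fun x => r x - 1) q :=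
    Measure.integrable_toReal_rnDeriv.sub (integrable_const 1)
  have hint : Integrable (fun x => r x * Real.log (r x)) q := by
    have hrm : Measurable r := (Measure.measurable_rnDeriv γ q).ennreal_toReal
    exact integrable_of_le_of_le (by fun_prop : Measurable _).aestronglyMeasurable
      (ae_of_all _ fun x => self_sub_one_le_mul_log (hr0 x)) (ae_of_all _ hbound) hlower hupper
  rw [Ent, if_pos ⟨hac, hint⟩, EReal.coe_le_coe_iff]
  calc ∫ x, r x * Real.log (r x) ∂q
      ≤ ∫ x, r x * (Real.log N + (r x / N - 1)) ∂q := integral_mono hint hupper hbound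
    _ = Real.log N + ((∫ x, r x ∂γ) / N - 1) := by
        rw [integral_toReal_rnDeriv_mul hac, integral_add (integrable_const _) (by fun_prop),
          integral_sub (by fun_prop) (integrable_const _), integral_div]
        simp
    _ ≤ Real.log N := by
        have : (∫ x, r x ∂γ) / N ≤ 1 := (div_le_one (by exact_mod_cast hN)).2 hrN
        linarith

theorem Ent_le_log_of_le_withDensity {γ q : Measure α} [IsProbabilityMeasure γ]
    [IsProbabilityMeasure q] {w : α → ℝ≥0∞} (hw : γ ≤ q.withDensity w) {N : ℝ≥0} (hN : 0 < N)
    (h : ∫⁻ x, w x ∂γ ≤ N) : Ent γ q ≤ (Real.log N : EReal) := by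
  have hac : γ ≪ q :=
    (Measure.absolutelyContinuous_of_le hw).trans (withDensity_absolutelyContinuous _ _)
  refine Ent_le_log_of_lintegral_rnDeriv_le hac hN ((lintegral_mono_ae ?_).trans h)
  exact hac.ae_le (rnDeriv_le_of_le_withDensity hw)

theorem integral_le_add_of_le_entCost {β : Type*} [MeasurableSpace β]
    {μ : Measure α} {ν : Measure β} [IsProbabilityMeasure μ] [IsProbabilityMeasure ν]
    {c : α × β → ℝ} {ε : ℝ} (hε : 0 ≤ ε) {γ η : Measure (α × β)} [IsProbabilityMeasure γ]
    [IsProbabilityMeasure η]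
    (hγ : ((∫ p, c p ∂γ : ℝ) : EReal) + (ε : EReal) * Ent γ (μ.prod ν) ≤ entCost μ ν c ε)
    (hη₁ : η.fst = μ) (hη₂ : η.snd = ν) {L : ℝ} (hL : Ent η (μ.prod ν) ≤ (L : EReal)) :
    ∫ p, c p ∂γ ≤ ∫ p, c p ∂η + ε * L := by
  have hε' : (0 : EReal) ≤ ε := EReal.coe_nonneg.2 hε
  rw [← EReal.coe_le_coe_iff]
  calc ((∫ p, c p ∂γ : ℝ) : EReal)
      ≤ ((∫ p, c p ∂γ : ℝ) : EReal) + (ε : EReal) * Ent γ (μ.prod ν) :=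
        le_add_of_nonneg_right (mul_nonneg hε' (Ent_nonneg γ _))
    _ ≤ ((∫ p, c p ∂η : ℝ) : EReal) + (ε : EReal) * Ent η (μ.prod ν) :=
        hγ.trans (sInf_le ⟨η, inferInstance, hη₁, hη₂, rfl⟩)
    _ ≤ ((∫ p, c p ∂η : ℝ) : EReal) + (ε : EReal) * (L : EReal) := by gcongr
    _ = ((∫ p, c p ∂η + ε * L : ℝ) : EReal) := by push_cast; rfl

end Entropy

section BlockPlan

open ProbabilityTheory

variable {X Y ι : Type*} [MeasurableSpace X] [MeasurableSpace Y] [Fintype ι]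

/-- The block approximation of the deterministic plan `(id, T)_# μ` along the partition into the
fibers of `φ`: given the cell of `x`, the point `y = T x'` comes from an independent copy `x'` of
`x` conditioned to lie in the same cell. Cells of measure zero contribute nothing. -/
def blockPlan (μ : Measure X) (T : X → Y) (φ : X → ι) : Measure (X × Y) :=
  ∑ i, μ (φ ⁻¹' {i}) • (μ[|φ ← i]).prod ((μ[|φ ← i]).map T)

variable [MeasurableSpace ι] [DiscreteMeasurableSpace ι]
  {μ : Measure X} {T : X → Y} {φ : X → ι}

theorem fst_blockPlan [IsFiniteMeasure μ] (hT : Measurable T) (hφ : Measurable φ) :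
    (blockPlan μ T φ).fst = μ := by
  rw [Measure.fst, blockPlan, Measure.map_finset_sum' measurable_fst.aemeasurable]
  refine .trans (Finset.sum_congr rfl fun i _ => ?_) (sum_meas_smul_cond_fiber hφ μ)
  rw [Measure.map_smul, Measure.map_fst_prod, Measure.map_apply hT .univ, preimage_univ]
  rcases eq_zero_or_isProbabilityMeasure μ[|φ ← i] with h | h <;> simp [h]

theorem snd_blockPlan [IsFiniteMeasure μ] (hT : Measurable T) (hφ : Measurable φ) :
    (blockPlan μ T φ).snd = μ.map T := by
  rw [Measure.snd, blockPlan, Measure.map_finset_sum' measurable_snd.aemeasurable]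
  nth_rw 4 [← sum_meas_smul_cond_fiber hφ μ]
  rw [Measure.map_finset_sum' hT.aemeasurable]
  refine Finset.sum_congr rfl fun i _ => ?_
  rw [Measure.map_smul, Measure.map_snd_prod, Measure.map_smul]
  rcases eq_zero_or_isProbabilityMeasure μ[|φ ← i] with h | h <;> simp [h]

theorem isProbabilityMeasure_blockPlan [IsProbabilityMeasure μ] (hT : Measurable T)
    (hφ : Measurable φ) : IsProbabilityMeasure (blockPlan μ T φ) :=
  ⟨by rw [← Measure.fst_univ, fst_blockPlan hT hφ, measure_univ]⟩

theorem ae_blockPlan [SFinite μ] (hT : Measurable T) (hφ : Measurable φ) {P : X × Y → Prop}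
    (hP : MeasurableSet {p | P p}) (h : ∀ᵐ x ∂μ, ∀ᵐ x' ∂μ, φ x = φ x' → P (x, T x')) :
    ∀ᵐ p ∂blockPlan μ T φ, P p := by
  rw [blockPlan, ae_finsetSum_measure_iff]
  refine fun i _ => Measure.ae_smul_measure ?_ _
  have hcell : ∀ᵐ x ∂μ[|φ ← i], φ x = i := ae_cond_mem (hφ (.singleton i))
  refine (Measure.ae_prod_iff_ae_ae hP).2 ?_
  filter_upwards [cond_absolutelyContinuous.ae_le h, hcell] with x hx hxi
  refine (ae_map_iff hT.aemeasurable (measurable_prodMk_left hP)).2 ?_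
  filter_upwards [cond_absolutelyContinuous.ae_le hx, hcell] with x' hx' hxi'
  exact hx' (hxi.trans hxi'.symm)

theorem smul_cond_prod_map_cond_le [SFinite μ] (hT : Measurable T) (A : Set X) :
    μ A • (μ[|A]).prod ((μ[|A]).map T) ≤
      (μ A)⁻¹ • (μ.prod (μ.map T)).restrict (A ×ˢ univ) := by
  calc μ A • (μ[|A]).prod ((μ[|A]).map T)
      = (μ A * (μ A)⁻¹) • (μ A)⁻¹ • (μ.restrict A).prod ((μ.restrict A).map T) := by
        rw [ProbabilityTheory.cond, Measure.map_smul, Measure.prod_smul_left,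
          Measure.prod_smul_right, mul_smul]
    _ ≤ (1 : ℝ≥0∞) • (μ A)⁻¹ • (μ.restrict A).prod (μ.map T) := by
        gcongr
        · exact ENNReal.mul_inv_le_one _
        · exact Measure.restrict_le_self
    _ = (μ A)⁻¹ • (μ.prod (μ.map T)).restrict (A ×ˢ univ) := by
        rw [one_smul, Measure.restrict_prod_eq_prod_univ]

theorem blockPlan_le_withDensity [SFinite μ] (hT : Measurable T) (hφ : Measurable φ) :
    blockPlan μ T φ ≤
      (μ.prod (μ.map T)).withDensity fun p => (μ (φ ⁻¹' {φ p.1}))⁻¹ := by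
  set q := μ.prod (μ.map T)
  set w : X × Y → ℝ≥0∞ := fun p => (μ (φ ⁻¹' {φ p.1}))⁻¹
  have hcell (i : ι) : MeasurableSet ((φ ⁻¹' {i}) ×ˢ (univ : Set Y)) :=
    (hφ (.singleton i)).prod .univ
  have hrestrict (i : ι) : (μ (φ ⁻¹' {i}))⁻¹ • q.restrict ((φ ⁻¹' {i}) ×ˢ univ) =
      (q.withDensity w).restrict ((φ ⁻¹' {i}) ×ˢ univ) := by
    rw [restrict_withDensity (hcell i), ← withDensity_const]
    refine withDensity_congr_ae ?_
    filter_upwards [ae_restrict_mem (hcell i)] with p hp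
    simp only [w, show φ p.1 = i from hp.1]
  have hunion : ⋃ i, (φ ⁻¹' {i}) ×ˢ (univ : Set Y) = univ := by
    ext p; simp
  calc blockPlan μ T φ
      ≤ ∑ i, (μ (φ ⁻¹' {i}))⁻¹ • q.restrict ((φ ⁻¹' {i}) ×ˢ univ) :=
        Finset.sum_le_sum fun i _ => smul_cond_prod_map_cond_le hT _
    _ = ∑ i, (q.withDensity w).restrict ((φ ⁻¹' {i}) ×ˢ univ) := by simp_rw [hrestrict]
    _ = q.withDensity w := by
        have hdisj : Pairwise (Function.onFun Disjoint
            fun i => (φ ⁻¹' {i}) ×ˢ (univ : Set Y)) := fun i j hij =>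
          Disjoint.set_prod_left ((disjoint_singleton.2 hij).preimage φ) _ _
        rw [← Measure.sum_fintype, ← Measure.restrict_iUnion hdisj hcell, hunion,
          Measure.restrict_univ]

theorem lintegral_inv_measure_fiber_le_card (μ : Measure X) (hφ : Measurable φ) :
    ∫⁻ x, (μ (φ ⁻¹' {φ x}))⁻¹ ∂μ ≤ Fintype.card ι := by
  have hmap : ∫⁻ x, (μ (φ ⁻¹' {φ x}))⁻¹ ∂μ = ∫⁻ i, (μ (φ ⁻¹' {i}))⁻¹ ∂μ.map φ :=
    (lintegral_map (f := fun i => (μ (φ ⁻¹' {i}))⁻¹) .of_discrete hφ).symm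
  rw [hmap, lintegral_fintype, Fintype.card, Finset.card_eq_sum_ones, Nat.cast_sum]
  refine Finset.sum_le_sum fun i _ => ?_
  rw [Measure.map_apply hφ (.singleton i), Nat.cast_one]
  exact ENNReal.inv_mul_le_one _

theorem Ent_blockPlan_le_log_card [IsProbabilityMeasure μ] (hT : Measurable T)
    (hφ : Measurable φ) :
    Ent (blockPlan μ T φ) (μ.prod (μ.map T)) ≤ (Real.log (Fintype.card ι) : EReal) := by
  have := Measure.isProbabilityMeasure_map (μ := μ) hT.aemeasurable
  have := isProbabilityMeasure_blockPlan (μ := μ) hT hφ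
  have : Nonempty ι := (nonempty_of_isProbabilityMeasure μ).map φ
  have hw : Measurable fun x => (μ (φ ⁻¹' {φ x}))⁻¹ :=
    (Measurable.of_discrete (f := fun i => (μ (φ ⁻¹' {i}))⁻¹)).comp hφ
  refine Ent_le_log_of_le_withDensity (N := Fintype.card ι) (blockPlan_le_withDensity hT hφ)
    (by exact_mod_cast Fintype.card_pos) ?_
  calc ∫⁻ p, (μ (φ ⁻¹' {φ p.1}))⁻¹ ∂blockPlan μ T φ
      = ∫⁻ x, (μ (φ ⁻¹' {φ x}))⁻¹ ∂(blockPlan μ T φ).fst := (lintegral_map hw measurable_fst).symm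
    _ ≤ Fintype.card ι := by
        rw [fst_blockPlan hT hφ]
        exact lintegral_inv_measure_fiber_le_card μ hφ

end BlockPlan

section CoveringNumber

open Metric Module

variable {X : Type*} [PseudoMetricSpace X] {K : Set X}

/-- `K` has covering exponent `s` if it is covered by `O(δ⁻ˢ)` balls of radius `δ`, uniformly in
`0 < δ < 1`; its upper box-counting dimension is then at most `s`. The constant is kept
existential because it only enters the logarithm of the covering number. -/
def HasCoveringExponent (s : ℝ) (K : Set X) : Prop :=
  ∃ A : ℝ≥0, ∀ δ : ℝ≥0, 0 < δ → δ < 1 →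
    (coveringNumber δ K : ℝ≥0∞) ≤ ((A * δ ^ (-s) : ℝ≥0) : ℝ≥0∞)

theorem encard_le_of_isSeparated_of_subset_closedBall {E : Type*} [NormedAddCommGroup E]
    [NormedSpace ℝ E] [FiniteDimensional ℝ E] {C : Set E} {R δ : ℝ≥0} (hδ : 0 < δ) {z : E}
    (hC : IsSeparated δ C) (hCR : C ⊆ closedBall z R) :
    (C.encard : ℝ≥0∞) ≤ (((2 * R + δ) / δ) ^ finrank ℝ E : ℝ≥0) := by
  borelize E
  let μ : Measure E := Measure.addHaar
  set d := finrank ℝ E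
  have hδ2 : 0 < δ / 2 := half_pos hδ
  have hdisj : Pairwise (Function.onFun Disjoint fun c : C => ball (c : E) (δ / 2 : ℝ≥0)) := by
    intro c c' hcc'
    refine ball_disjoint_ball ?_
    have hsep : (δ : ℝ≥0∞) < edist (c : E) c' := hC c.2 c'.2 (Subtype.coe_injective.ne hcc')
    rw [edist_nndist, ENNReal.coe_lt_coe] at hsep
    rw [← NNReal.coe_add, add_halves]
    exact_mod_cast hsep.le
  have hsub : ⋃ c : C, ball (c : E) (δ / 2 : ℝ≥0) ⊆ ball z (R + δ / 2 : ℝ≥0) := by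
    refine iUnion_subset fun c => ball_subset_ball' ?_
    push_cast
    linarith [mem_closedBall.1 (hCR c.2)]
  have hvol : C.encard * ((δ / 2 : ℝ≥0) : ℝ≥0∞) ^ d * μ (ball 0 1) ≤
      ((R + δ / 2 : ℝ≥0) : ℝ≥0∞) ^ d * μ (ball 0 1) := by
    have hle := (tsum_meas_le_meas_iUnion_of_disjoint μ (fun _ => measurableSet_ball) hdisj).trans
      (measure_mono hsub)
    simp only [Measure.addHaar_ball_of_pos μ _ (NNReal.coe_pos.2 hδ2),
      Measure.addHaar_ball_of_pos μ _ (NNReal.coe_pos.2 (add_pos_of_nonneg_of_pos zero_le hδ2)),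
      ENNReal.tsum_const, ENat.card_coe_set_eq, ← NNReal.coe_pow, ENNReal.ofReal_coe_nnreal,
      ENNReal.coe_pow, ← mul_assoc] at hle
    exact hle
  have hball : μ (ball 0 1) ≠ 0 := (measure_ball_pos μ 0 one_pos).ne'
  have hratio : (2 * R + δ) / δ = (R + δ / 2) / (δ / 2) := by
    field_simp
  rw [ENNReal.mul_le_mul_iff_left hball measure_ball_lt_top.ne] at hvol
  rw [hratio, div_pow, ENNReal.coe_div (pow_pos hδ2 _).ne', ENNReal.coe_pow, ENNReal.coe_pow]
  exact (ENNReal.le_div_iff_mul_le (.inl (by positivity)) (.inl (by finiteness))).2 hvol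

theorem hasCoveringExponent_finrank {E : Type*} [NormedAddCommGroup E] [NormedSpace ℝ E]
    [FiniteDimensional ℝ E] {K : Set E} (hK : Bornology.IsBounded K) :
    HasCoveringExponent (finrank ℝ E) K := by
  obtain ⟨R, hR⟩ := hK.subset_closedBall 0
  refine ⟨(2 * R.toNNReal + 1) ^ finrank ℝ E, fun δ hδ hδ1 => ?_⟩
  have hpack : (packingNumber δ K : ℝ≥0∞) ≤
      (((2 * R.toNNReal + δ) / δ) ^ finrank ℝ E : ℝ≥0) := by
    simp only [packingNumber, ENat.toENNReal_iSup, iSup_le_iff]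
    exact fun C hC hsep => encard_le_of_isSeparated_of_subset_closedBall hδ hsep
      (hC.trans (hR.trans (closedBall_subset_closedBall (le_coe_toNNReal R))))
  calc (coveringNumber δ K : ℝ≥0∞) ≤ packingNumber δ K := by
        exact_mod_cast coveringNumber_le_packingNumber δ K
    _ ≤ (((2 * R.toNNReal + δ) / δ) ^ finrank ℝ E : ℝ≥0) := hpack
    _ ≤ _ := by
        rw [NNReal.rpow_neg, NNReal.rpow_natCast, ← div_eq_mul_inv, ← div_pow]
        gcongr

variable [MeasurableSpace X] [OpensMeasurableSpace X]

theorem exists_measurable_forall_edist_le {ι : Type*} [Finite ι] [Nonempty ι]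
    [MeasurableSpace ι] (e : ι → X) :
    ∃ φ : X → ι, Measurable φ ∧ ∀ x i, edist (e (φ x)) x ≤ edist (e i) x := by
  obtain ⟨g, hg⟩ := exists_surjective_nat ι
  obtain ⟨N, hN⟩ := Set.finite_range (Function.surjInv hg) |>.bddAbove
  refine ⟨fun x => g (SimpleFunc.nearestPtInd (e ∘ g) N x),
    (Measurable.of_discrete (f := g)).comp (SimpleFunc.measurable _), fun x i => ?_⟩
  have := SimpleFunc.edist_nearestPt_le (e ∘ g) x (hN (mem_range_self i))
  simpa [SimpleFunc.nearestPt, Function.surjInv_eq hg] using this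

theorem exists_measurable_partition_of_coveringNumber_le {N δ : ℝ≥0} (hK : K.Nonempty)
    (h : (coveringNumber δ K : ℝ≥0∞) ≤ N) :
    ∃ (S : Finset X) (φ : X → S), (S.card : ℝ≥0) ≤ N ∧ Measurable φ ∧
      ∀ x ∈ K, ∀ y ∈ K, φ x = φ y → dist x y ≤ 2 * δ := by
  have htop : coveringNumber δ K ≠ ⊤ := fun htop => by simp [htop] at h
  obtain ⟨C, hCK, hCfin, hcover, hcard⟩ := exists_set_encard_eq_coveringNumber htop
  lift C to Finset X using hCfin
  obtain ⟨x₀, hx₀⟩ := hK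
  obtain ⟨c₀, hc₀, -⟩ := hcover hx₀
  have : Nonempty C := ⟨c₀, hc₀⟩
  obtain ⟨φ, hφ, hnear⟩ := exists_measurable_forall_edist_le (Subtype.val : C → X)
  have hdist {x : X} (hx : x ∈ K) : dist (φ x : X) x ≤ δ := by
    obtain ⟨c, hc, hxc⟩ := hcover hx
    have := (hnear x ⟨c, hc⟩).trans ((edist_comm c x).trans_le hxc)
    rwa [edist_nndist, ENNReal.coe_le_coe] at this
  refine ⟨C, φ, ?_, hφ, fun x hx y hy hxy => ?_⟩
  · rw [← hcard, Set.encard_coe_eq_coe_finsetCard, ENat.toENNReal_coe] at h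
    exact ENNReal.coe_le_coe.1 (by simpa using h)
  · calc dist x y ≤ dist (φ x : X) x + dist (φ x : X) y := dist_triangle_left _ _ _
      _ ≤ δ + δ := add_le_add (hdist hx) (hxy ▸ hdist hy)
      _ = 2 * δ := (two_mul _).symm

theorem HasCoveringExponent.exists_measurable_partition {s : ℝ} (h : HasCoveringExponent s K)
    (hK : K.Nonempty) :
    ∃ C : ℝ, 0 ≤ C ∧ ∀ δ ∈ Ioo (0 : ℝ) 1, ∃ (S : Finset X) (φ : X → S), Measurable φ ∧
      Real.log S.card ≤ s * Real.log (1 / δ) + C ∧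
      ∀ x ∈ K, ∀ y ∈ K, φ x = φ y → dist x y ≤ 2 * δ := by
  obtain ⟨A, hA⟩ := h
  refine ⟨|Real.log A|, abs_nonneg _, fun δ ⟨hδ0, hδ1⟩ => ?_⟩
  lift δ to ℝ≥0 using hδ0.le
  obtain ⟨S, φ, hcard, hφ, hdist⟩ :=
    exists_measurable_partition_of_coveringNumber_le hK (hA δ hδ0 hδ1)
  have hS : 0 < S.card := hK.elim fun x _ => Finset.card_pos.2 ⟨φ x, (φ x).2⟩
  have hcard' : (S.card : ℝ) ≤ A * (δ : ℝ) ^ (-s) := by exact_mod_cast hcard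
  have hδs : 0 < (δ : ℝ) ^ (-s) := Real.rpow_pos_of_pos hδ0 _
  have hA0 : 0 < (A : ℝ) :=
    pos_of_mul_pos_left ((Nat.cast_pos.2 hS).trans_le hcard') hδs.le
  refine ⟨S, φ, hφ, ?_, hdist⟩
  calc Real.log S.card ≤ Real.log (A * (δ : ℝ) ^ (-s)) := by gcongr
    _ = s * Real.log (1 / δ) + Real.log A := by
        rw [Real.log_mul hA0.ne' hδs.ne', Real.log_rpow hδ0, one_div, Real.log_inv]
        ring
    _ ≤ s * Real.log (1 / δ) + |Real.log A| := by gcongr; exact le_abs_self _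

end CoveringNumber

section CompactSupport

variable {X Y : Type*} [MeasurableSpace X] [MeasurableSpace Y]

theorem integrable_of_continuous_of_ae_mem_isCompact [TopologicalSpace X]
    [OpensMeasurableSpace X] {μ : Measure X} [IsFiniteMeasure μ] {K : Set X} (hK : IsCompact K)
    (hμ : ∀ᵐ x ∂μ, x ∈ K) {h : X → ℝ} (hh : Continuous h) : Integrable h μ := by
  obtain ⟨C, hC⟩ := hK.exists_bound_of_continuousOn hh.continuousOn
  refine Integrable.of_bound hh.measurable.aestronglyMeasurable C ?_
  filter_upwards [hμ] with x hx using hC x hx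

theorem ae_mem_prod_of_fst_of_snd {γ : Measure (X × Y)} {A : Set X} {B : Set Y}
    (hA : ∀ᵐ x ∂γ.fst, x ∈ A) (hB : ∀ᵐ y ∂γ.snd, y ∈ B) : ∀ᵐ p ∂γ, p ∈ A ×ˢ B := by
  filter_upwards [ae_of_ae_map measurable_fst.aemeasurable hA,
    ae_of_ae_map measurable_snd.aemeasurable hB] with p hp₁ hp₂ using ⟨hp₁, hp₂⟩

theorem ae_map_mem_image {μ : Measure X} {K : Set X} (hK : ∀ᵐ x ∂μ, x ∈ K) {T : X → Y}
    (hT : Measurable T) (hTK : MeasurableSet (T '' K)) : ∀ᵐ y ∂μ.map T, y ∈ T '' K := by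
  refine (ae_map_iff hT.aemeasurable hTK).2 ?_
  filter_upwards [hK] with x hx using mem_image_of_mem T hx

end CompactSupport

section DualityGap

variable {E : Type*} [NormedAddCommGroup E] [InnerProductSpace ℝ E] {K L : Set E} {f : E → ℝ}

/-- The Legendre transform of the restriction of `f` to `K`. Working on a compact set keeps the
supremum finite and the transform continuous; it is `0` where the supremum is infinite. -/
def legendreOn (K : Set E) (f : E → ℝ) (y : E) : ℝ :=
  sSup ((fun x => inner ℝ x y - f x) '' K)

/-- The duality gap `f(x) + f*(y) - ⟪x, y⟫` at `p = (x, y)`, with `f*` the Legendre transform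
over `K`. It measures the suboptimality of `p` for the quadratic transport problem. -/
def dualityGap (K : Set E) (f : E → ℝ) (p : E × E) : ℝ :=
  f p.1 + legendreOn K f p.2 - inner ℝ p.1 p.2

theorem continuous_legendreOn (hK : IsCompact K) (hf : Continuous f) :
    Continuous (legendreOn K f) :=
  hK.continuous_sSup (f := fun y x => inner ℝ x y - f x) (by fun_prop)

theorem continuous_dualityGap (hK : IsCompact K) (hf : Continuous f) :
    Continuous (dualityGap K f) := by
  have := continuous_legendreOn hK hf
  unfold dualityGap
  fun_prop

theorem dualityGap_gradient [CompleteSpace E] {T : E → E} (hf : ConvexOn ℝ Set.univ f)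
    (hT : ∀ x, HasGradientAt f (T x) x) (x : E) {y : E} (hy : y ∈ K) :
    dualityGap K f (x, T y) = f x - f y - inner ℝ (T y) (x - y) := by
  have hmax : IsGreatest ((fun x => inner ℝ x (T y) - f x) '' K) (inner ℝ y (T y) - f y) := by
    refine ⟨⟨y, hy, rfl⟩, ?_⟩
    rintro _ ⟨z, -, rfl⟩
    have := add_inner_gradient_le_of_convexOn hf (mem_univ y) (mem_univ z) (hT y)
    rw [inner_sub_right] at this
    simp only [real_inner_comm (T y)] at this ⊢
    linarith
  rw [dualityGap, legendreOn, hmax.csSup_eq, inner_sub_right, real_inner_comm (T y) x,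
    real_inner_comm (T y) y]
  ring

variable [MeasurableSpace E] [BorelSpace E] [SecondCountableTopology E]

theorem integral_cost_eq_add_integral_dualityGap (hK : IsCompact K) (hL : IsCompact L)
    (hf : Continuous f) {γ : Measure (E × E)} [IsFiniteMeasure γ]
    (hγ : ∀ᵐ p ∂γ, p ∈ K ×ˢ L) :
    ∫ p, ‖p.1 - p.2‖ ^ 2 / 2 ∂γ = ∫ x, (‖x‖ ^ 2 / 2 - f x) ∂γ.fst +
      ∫ y, (‖y‖ ^ 2 / 2 - legendreOn K f y) ∂γ.snd + ∫ p, dualityGap K f p ∂γ := by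
  have hleg := continuous_legendreOn hK hf
  have hint {h : E × E → ℝ} (hh : Continuous h) : Integrable h γ :=
    integrable_of_continuous_of_ae_mem_isCompact (hK.prod hL) hγ hh
  have hfst : Continuous fun x : E => ‖x‖ ^ 2 / 2 - f x := by fun_prop
  have hsnd : Continuous fun y : E => ‖y‖ ^ 2 / 2 - legendreOn K f y := by fun_prop
  rw [Measure.fst, Measure.snd,
    integral_map measurable_fst.aemeasurable hfst.measurable.aestronglyMeasurable,
    integral_map measurable_snd.aemeasurable hsnd.measurable.aestronglyMeasurable,
    ← integral_add (hint (by fun_prop)) (hint (by fun_prop)),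
    ← integral_add (hint (by fun_prop)) (hint (continuous_dualityGap hK hf))]
  refine integral_congr_ae (ae_of_all _ fun p => ?_)
  simp only [dualityGap, norm_sub_sq_real]
  ring

theorem integral_dualityGap_le_add_of_le_entCost {μ ν : Measure E} [IsProbabilityMeasure μ]
    [IsProbabilityMeasure ν] (hK : IsCompact K) (hL : IsCompact L) (hf : Continuous f)
    (hμ : ∀ᵐ x ∂μ, x ∈ K) (hν : ∀ᵐ y ∂ν, y ∈ L) {ε : ℝ} (hε : 0 ≤ ε) {γ η : Measure (E × E)}
    [IsProbabilityMeasure γ] [IsProbabilityMeasure η]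
    (hγ₁ : γ.fst = μ) (hγ₂ : γ.snd = ν) (hη₁ : η.fst = μ) (hη₂ : η.snd = ν)
    (hγ : ((∫ p, ‖p.1 - p.2‖ ^ 2 / 2 ∂γ : ℝ) : EReal) + (ε : EReal) * Ent γ (μ.prod ν) ≤
      entCost μ ν (fun p => ‖p.1 - p.2‖ ^ 2 / 2) ε)
    {B : ℝ} (hB : Ent η (μ.prod ν) ≤ (B : EReal)) :
    ∫ p, dualityGap K f p ∂γ ≤ ∫ p, dualityGap K f p ∂η + ε * B := by
  have hcost := integral_le_add_of_le_entCost hε hγ hη₁ hη₂ hB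
  have hγKL := ae_mem_prod_of_fst_of_snd (hγ₁.symm ▸ hμ) (hγ₂.symm ▸ hν)
  have hηKL := ae_mem_prod_of_fst_of_snd (hη₁.symm ▸ hμ) (hη₂.symm ▸ hν)
  rw [integral_cost_eq_add_integral_dualityGap hK hL hf hγKL,
    integral_cost_eq_add_integral_dualityGap hK hL hf hηKL, hγ₁, hγ₂, hη₁, hη₂] at hcost
  linarith

end DualityGap

section Stability

variable {E : Type*} [NormedAddCommGroup E] [InnerProductSpace ℝ E] [CompleteSpace E]
  [SecondCountableTopology E] [MeasurableSpace E] [BorelSpace E]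
  {K : Set E} {f : E → ℝ} {T : E → E} {M : ℝ≥0}

theorem integral_norm_sub_gradient_sq_le (hf : ConvexOn ℝ Set.univ f)
    (hT : ∀ x, HasGradientAt f (T x) x) (hLip : LipschitzWith M T) (hK : IsCompact K)
    {γ : Measure (E × E)} [IsFiniteMeasure γ] (hγ : ∀ᵐ p ∂γ, p ∈ K ×ˢ (T '' K)) :
    ∫ p, ‖p.2 - T p.1‖ ^ 2 ∂γ ≤ 2 * M * ∫ p, dualityGap K f p ∂γ := by
  have hfc : Continuous f := continuous_iff_continuousAt.2 fun x => (hT x).continuousAt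
  have hTc : Continuous T := hLip.continuous
  have hint {h : E × E → ℝ} (hh : Continuous h) : Integrable h γ :=
    integrable_of_continuous_of_ae_mem_isCompact (hK.prod (hK.image hTc)) hγ hh
  rw [← integral_const_mul]
  refine integral_mono_ae (hint (by fun_prop))
    ((hint (continuous_dualityGap hK hfc)).const_mul _) ?_
  filter_upwards [hγ]
  rintro ⟨x, _⟩ ⟨-, y, hy, rfl⟩
  simp only [norm_sub_rev (T y), dualityGap_gradient hf hT x hy]
  exact norm_gradient_sub_sq_le_of_convexOn hf hT hLip x y

variable {μ : Measure E} [IsProbabilityMeasure μ] {ι : Type*} [Fintype ι] [MeasurableSpace ι]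
  [DiscreteMeasurableSpace ι] {φ : E → ι} {ρ : ℝ}

theorem integral_dualityGap_blockPlan_le (hf : ConvexOn ℝ Set.univ f)
    (hT : ∀ x, HasGradientAt f (T x) x) (hLip : LipschitzWith M T) (hK : IsCompact K)
    (hμ : ∀ᵐ x ∂μ, x ∈ K) (hφ : Measurable φ)
    (hρ : ∀ x ∈ K, ∀ y ∈ K, φ x = φ y → dist x y ≤ ρ) :
    ∫ p, dualityGap K f p ∂blockPlan μ T φ ≤ M / 2 * ρ ^ 2 := by
  have hfc : Continuous f := continuous_iff_continuousAt.2 fun x => (hT x).continuousAt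
  have hgap := continuous_dualityGap hK hfc
  have hTm : Measurable T := hLip.continuous.measurable
  have := isProbabilityMeasure_blockPlan (μ := μ) hTm hφ
  have hpointwise : ∀ᵐ p ∂blockPlan μ T φ, dualityGap K f p ≤ M / 2 * ρ ^ 2 := by
    refine ae_blockPlan hTm hφ (measurableSet_le hgap.measurable measurable_const) ?_
    filter_upwards [hμ] with x hx
    filter_upwards [hμ] with y hy hxy
    calc dualityGap K f (x, T y) = f x - f y - inner ℝ (T y) (x - y) :=
          dualityGap_gradient hf hT x hy
      _ ≤ M / 2 * ‖x - y‖ ^ 2 := by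
          linarith [le_add_inner_gradient_add_sq_of_lipschitzWith hT hLip y x]
      _ ≤ M / 2 * ρ ^ 2 := by
          gcongr
          exact dist_eq_norm x y ▸ hρ x hx y hy hxy
  have hTK := hK.image hLip.continuous
  have hsupp : ∀ᵐ p ∂blockPlan μ T φ, p ∈ K ×ˢ (T '' K) := by
    refine ae_mem_prod_of_fst_of_snd ?_ ?_
    · rwa [fst_blockPlan hTm hφ]
    · rw [snd_blockPlan hTm hφ]
      exact ae_map_mem_image hμ hTm hTK.measurableSet
  have hint := integrable_of_continuous_of_ae_mem_isCompact (hK.prod hTK) hsupp hgap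
  simpa using integral_mono_ae hint (integrable_const _) hpointwise

theorem integral_norm_sub_gradient_sq_le_of_partition (hf : ConvexOn ℝ Set.univ f)
    (hT : ∀ x, HasGradientAt f (T x) x) (hLip : LipschitzWith M T) (hK : IsCompact K)
    (hμ : ∀ᵐ x ∂μ, x ∈ K) (hφ : Measurable φ)
    (hρ : ∀ x ∈ K, ∀ y ∈ K, φ x = φ y → dist x y ≤ ρ) {ε : ℝ} (hε : 0 ≤ ε)
    {γ : Measure (E × E)} [IsProbabilityMeasure γ] (hγ₁ : γ.fst = μ) (hγ₂ : γ.snd = μ.map T)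
    (hγ : ((∫ p, ‖p.1 - p.2‖ ^ 2 / 2 ∂γ : ℝ) : EReal) + (ε : EReal) * Ent γ (μ.prod (μ.map T)) ≤
      entCost μ (μ.map T) (fun p => ‖p.1 - p.2‖ ^ 2 / 2) ε) :
    ∫ p, ‖p.2 - T p.1‖ ^ 2 ∂γ ≤
      2 * M * (M / 2 * ρ ^ 2 + ε * Real.log (Fintype.card ι)) := by
  have hfc : Continuous f := continuous_iff_continuousAt.2 fun x => (hT x).continuousAt
  have hTm : Measurable T := hLip.continuous.measurable
  have := Measure.isProbabilityMeasure_map (μ := μ) hTm.aemeasurable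
  have := isProbabilityMeasure_blockPlan (μ := μ) hTm hφ
  have hTK := hK.image hLip.continuous
  have hν := ae_map_mem_image hμ hTm hTK.measurableSet
  calc ∫ p, ‖p.2 - T p.1‖ ^ 2 ∂γ
      ≤ 2 * M * ∫ p, dualityGap K f p ∂γ :=
        integral_norm_sub_gradient_sq_le hf hT hLip hK
          (ae_mem_prod_of_fst_of_snd (hγ₁.symm ▸ hμ) (hγ₂.symm ▸ hν))
    _ ≤ 2 * M * (∫ p, dualityGap K f p ∂blockPlan μ T φ + ε * Real.log (Fintype.card ι)) := by
        gcongr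
        exact integral_dualityGap_le_add_of_le_entCost hK hTK hfc hμ hν hε hγ₁ hγ₂
          (fst_blockPlan hTm hφ) (snd_blockPlan hTm hφ) hγ (Ent_blockPlan_le_log_card hTm hφ)
    _ ≤ 2 * M * (M / 2 * ρ ^ 2 + ε * Real.log (Fintype.card ι)) := by
        gcongr
        exact integral_dualityGap_blockPlan_le hf hT hLip hK hμ hφ hρ

theorem entropic_stability_quadratic_smooth_general {s : ℝ} (μm μp : Measure E)
    [IsProbabilityMeasure μm] (hK : IsCompact K) (hKs : HasCoveringExponent s K)
    (hμK : μm Kᶜ = 0) (hconv : ConvexOn ℝ Set.univ f) (hgrad : ∀ x, HasGradientAt f (T x) x)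
    (hLip : LipschitzWith M T) (hpush : μm.map T = μp) :
    ∃ C : ℝ, 0 ≤ C ∧ ∀ ε ∈ Set.Ioo (0 : ℝ) 1, ∀ γε : Measure (E × E),
      IsProbabilityMeasure γε → γε.fst = μm → γε.snd = μp →
      ((∫ p, ‖p.1 - p.2‖ ^ 2 / 2 ∂γε : ℝ) : EReal) + (ε : EReal) * Ent γε (μm.prod μp)
          = entCost μm μp (fun p => ‖p.1 - p.2‖ ^ 2 / 2) ε →
      ∫ p, ‖p.2 - T p.1‖ ^ 2 ∂γε ≤ (M : ℝ) * (s * ε * Real.log (1 / ε) + C * ε) := by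
  subst hpush
  have hμ : ∀ᵐ x ∂μm, x ∈ K := hμK
  obtain ⟨C, hC, hpartition⟩ := hKs.exists_measurable_partition hμ.exists
  refine ⟨4 * M + 2 * C, by positivity, fun ε ⟨hε0, hε1⟩ γ _ hγ₁ hγ₂ hγ => ?_⟩
  obtain ⟨S, φ, hφ, hlog, hdist⟩ :=
    hpartition (√ε) ⟨Real.sqrt_pos.2 hε0, (Real.sqrt_lt_sqrt hε0.le hε1).trans_eq Real.sqrt_one⟩
  have hlogsqrt : Real.log (1 / √ε) = Real.log (1 / ε) / 2 := by
    rw [one_div, one_div, Real.log_inv, Real.log_inv, Real.log_sqrt hε0.le, neg_div]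
  rw [hlogsqrt] at hlog
  calc ∫ p, ‖p.2 - T p.1‖ ^ 2 ∂γ
      ≤ 2 * M * (M / 2 * (2 * √ε) ^ 2 + ε * Real.log (Fintype.card S)) :=
        integral_norm_sub_gradient_sq_le_of_partition hconv hgrad hLip hK hμ hφ hdist hε0.le
          hγ₁ hγ₂ hγ.le
    _ ≤ 2 * M * (M / 2 * (2 * √ε) ^ 2 + ε * (s * (Real.log (1 / ε) / 2) + C)) := by
        rw [Fintype.card_coe]
        gcongr
    _ = M * (s * ε * Real.log (1 / ε) + (4 * M + 2 * C) * ε) := by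
        rw [mul_pow, Real.sq_sqrt hε0.le]
        ring

end Stability

/-- **Quantitative stability (smooth case)**: if Brenier's map `T = ∇f` between compactly
supported `μ⁻, μ⁺` is `M`-Lipschitz, then the optimal entropic plans `γ_ε` for the quadratic
cost satisfy `∫∫ |y − T(x)|² dγ_ε ≤ M (d ε log(1/ε) + C ε)`. -/
theorem entropic_stability_quadratic_smooth {d : ℕ}
    (μm μp : Measure (EuclideanSpace ℝ (Fin d)))
    [IsProbabilityMeasure μm] [IsProbabilityMeasure μp]
    (hsm : ∃ K, IsCompact K ∧ μm Kᶜ = 0) (hsp : ∃ K, IsCompact K ∧ μp Kᶜ = 0)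
    (f : EuclideanSpace ℝ (Fin d) → ℝ) (T : EuclideanSpace ℝ (Fin d) → EuclideanSpace ℝ (Fin d))
    (hconv : ConvexOn ℝ Set.univ f)
    (hgrad : ∀ x, HasGradientAt f (T x) x)
    (M : ℝ≥0) (hLip : LipschitzWith M T)
    (hpush : μm.map T = μp) :
    ∃ C : ℝ, 0 ≤ C ∧ ∀ ε ∈ Set.Ioo (0 : ℝ) 1,
      ∀ γε : Measure (EuclideanSpace ℝ (Fin d) × EuclideanSpace ℝ (Fin d)),
        IsProbabilityMeasure γε → γε.fst = μm → γε.snd = μp →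
        ((∫ p, ‖p.1 - p.2‖ ^ 2 / 2 ∂γε : ℝ) : EReal) + (ε : EReal) * Ent γε (μm.prod μp)
            = entCost μm μp (fun p => ‖p.1 - p.2‖ ^ 2 / 2) ε →
        ∫ p, ‖p.2 - T p.1‖ ^ 2 ∂γε ≤ (M : ℝ) * ((d : ℝ) * ε * Real.log (1 / ε) + C * ε) := by
  obtain ⟨K, hK, hμK⟩ := hsm
  have hKd := hasCoveringExponent_finrank hK.isBounded
  rw [finrank_euclideanSpace_fin] at hKd
  exact entropic_stability_quadratic_smooth_general μm μp hK hKd hμK hconv hgrad hLip hpush
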